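/- arXiv:1901.06589 — 11 statements merged into one kernel-verified Lean document; each statement's English description precedes it below -/
import Mathlib

section
/- Let (X,f) and (Y,g) be compact dynamical systems and let φ : X → Y be a continuous surjection with φ ∘ f = g ∘ φ. If y₀ ∈ Y is an almost periodic point of (Y,g), then φ⁻¹(y₀) contains an almost periodic point of (X,f). -/
/-!
By minimality of `M`, the orbit closure of `y₀`, every nonempty closed invariant subset of the
closed invariant set `φ ⁻¹' M` maps onto `M`. Zorn's lemma and compactness yield a minimal subset
`A` of `φ ⁻¹' M` (`exists_minimalSubset`). Thus `φ '' A = M` contains `y₀`, so `A` contains a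
point `x` over `y₀`; as `A` is minimal, it is the orbit closure of `x`
(`MinimalSubset.almostPeriodicPt`).
-/

open Filter Set Metric Topology

section Defs

variable {X : Type*} [MetricSpace X]

/-- The orbit of a point under a map. -/
def orbitOf (f : X → X) (x : X) : Set X := Set.range fun n : ℕ => f^[n] x

/-- The ω-limit set of `x`: the set of limit points of the orbit. -/
def omegaLimitSet (f : X → X) (x : X) : Set X :=
  ⋂ N : ℕ, closure ((fun n : ℕ => f^[n] x) '' Set.Ici N)

/-- Topological transitivity. -/
def TopTransitive (f : X → X) : Prop :=
  ∀ U V : Set X, IsOpen U → IsOpen V → U.Nonempty → V.Nonempty →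
    ∃ n : ℕ, (f^[n] '' U ∩ V).Nonempty

/-- A minimal subset: nonempty, closed, invariant, with no proper nonempty closed
invariant subset. -/
def MinimalSubset (f : X → X) (M : Set X) : Prop :=
  M.Nonempty ∧ IsClosed M ∧ f '' M ⊆ M ∧
    ∀ N : Set X, N ⊆ M → N.Nonempty → IsClosed N → f '' N ⊆ N → N = M

/-- A point is almost periodic if its orbit closure is a minimal set. -/
def AlmostPeriodicPt (f : X → X) (x : X) : Prop :=
  MinimalSubset f (closure (orbitOf f x))

/-- A minimal system: every orbit closure is the whole space. -/
def MinimalSystem (f : X → X) : Prop := ∀ x : X, closure (orbitOf f x) = Set.univ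

/-- A point `x` is `ε`-sensitive. -/
def SensitivePt (f : X → X) (ε : ℝ) (x : X) : Prop :=
  ∀ δ > (0:ℝ), ∃ y : X, dist x y < δ ∧ ∃ n : ℕ, dist (f^[n] x) (f^[n] y) > ε

/-- Sensitive dependence on initial conditions. -/
def Sensitive (f : X → X) : Prop :=
  ∃ δ > (0:ℝ), ∀ U : Set X, IsOpen U → U.Nonempty →
    ∃ y ∈ U, ∃ z ∈ U, ∃ n : ℕ, dist (f^[n] y) (f^[n] z) > δ

/-- An equicontinuous system. -/
def EquicontinuousSystem (f : X → X) : Prop :=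
  ∀ ε > (0:ℝ), ∃ δ > (0:ℝ), ∀ x y : X, dist x y < δ → ∀ n : ℕ, dist (f^[n] x) (f^[n] y) < ε

/-- The separating times `N_δ(U) = {n : diam (fⁿ U) > δ}`. -/
def SepTimes (f : X → X) (δ : ℝ) (U : Set X) : Set ℕ :=
  {n : ℕ | Metric.diam (f^[n] '' U) > δ}

/-- A thick subset of ℕ. -/
def Thick (S : Set ℕ) : Prop := ∀ k : ℕ, ∃ n : ℕ, ∀ i ≤ k, n + i ∈ S

/-- A syndetic subset of ℕ. -/
def Syndetic (S : Set ℕ) : Prop := ∃ M : ℕ, ∀ n : ℕ, ∃ i ≤ M, n + i ∈ S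

/-- A piecewise syndetic subset of ℕ: an intersection of a syndetic set with a thick set. -/
def PiecewiseSyndetic (S : Set ℕ) : Prop :=
  ∃ A B : Set ℕ, Syndetic A ∧ Thick B ∧ S = A ∩ B

/-- A thickly syndetic subset of ℕ: meets every piecewise syndetic set. -/
def ThicklySyndetic (S : Set ℕ) : Prop :=
  ∀ T : Set ℕ, PiecewiseSyndetic T → (S ∩ T).Nonempty

/-- An IP subset of ℕ: contains all finite sums of distinct terms of some infinite sequence. -/
def IPSet (S : Set ℕ) : Prop :=
  ∃ seq : ℕ → ℕ, ∀ F : Finset ℕ, F.Nonempty → (∑ i ∈ F, seq i) ∈ S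

/-- Strong (cofinite) sensitivity. -/
def StronglySensitive (f : X → X) : Prop :=
  ∃ δ > (0:ℝ), ∀ U : Set X, IsOpen U → U.Nonempty → (SepTimes f δ U)ᶜ.Finite

/-- Thick sensitivity. -/
def ThicklySensitive (f : X → X) : Prop :=
  ∃ δ > (0:ℝ), ∀ U : Set X, IsOpen U → U.Nonempty → Thick (SepTimes f δ U)

/-- Syndetic sensitivity. -/
def SyndeticallySensitive (f : X → X) : Prop :=
  ∃ δ > (0:ℝ), ∀ U : Set X, IsOpen U → U.Nonempty → Syndetic (SepTimes f δ U)

/-- Thickly syndetic sensitivity. -/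
def ThicklySyndeticallySensitive (f : X → X) : Prop :=
  ∃ δ > (0:ℝ), ∀ U : Set X, IsOpen U → U.Nonempty → ThicklySyndetic (SepTimes f δ U)

/-- IP sensitivity. -/
def IPSensitive (f : X → X) : Prop :=
  ∃ δ > (0:ℝ), ∀ U : Set X, IsOpen U → U.Nonempty → IPSet (SepTimes f δ U)

/-- Multi-sensitivity. -/
def MultiSensitive (f : X → X) : Prop :=
  ∃ δ > (0:ℝ), ∀ k : ℕ, ∀ U : Fin (k + 1) → Set X,
    (∀ i, IsOpen (U i)) → (∀ i, (U i).Nonempty) →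
    (⋂ i, SepTimes f δ (U i)).Nonempty

/-- A proximal pair. -/
def ProximalPair (f : X → X) (x y : X) : Prop :=
  Filter.atTop.liminf (fun n : ℕ => dist (f^[n] x) (f^[n] y)) = 0

/-- Li–Yorke sensitivity. -/
def LiYorkeSensitive (f : X → X) : Prop :=
  ∃ δ > (0:ℝ), ∀ x : X, x ∈ closure {y : X | ProximalPair f x y ∧
    Filter.atTop.limsup (fun n : ℕ => dist (f^[n] x) (f^[n] y)) > δ}

/-- Uniform rigidity. -/
def UniformlyRigid (f : X → X) : Prop :=
  ∃ n : ℕ → ℕ, StrictMono n ∧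
    TendstoUniformly (fun k x => f^[n k] x) id Filter.atTop

/-- An equicontinuity point. -/
def EquicontinuityPt (f : X → X) (x : X) : Prop :=
  ∀ ε > (0:ℝ), ∃ δ > (0:ℝ), ∀ y : X, dist x y < δ → ∀ n : ℕ, dist (f^[n] x) (f^[n] y) < ε

/-- A syndetically equicontinuous point. -/
def SyndeticallyEquicontinuousPt (f : X → X) (x : X) : Prop :=
  ∀ ε > (0:ℝ), ∃ δ > (0:ℝ),
    Syndetic {n : ℕ | ∀ y : X, dist x y < δ → dist (f^[n] x) (f^[n] y) < ε}

/-- `𝓕`-sensitivity for a family `𝓕` of subsets of ℕ. -/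
def FSensitive (f : X → X) (𝓕 : Set (Set ℕ)) : Prop :=
  ∃ δ > (0:ℝ), ∀ U : Set X, IsOpen U → U.Nonempty → SepTimes f δ U ∈ 𝓕

end Defs

theorem mem_closure_orbitOf {X : Type*} [MetricSpace X] (f : X → X) (x : X) :
    x ∈ closure (orbitOf f x) :=
  subset_closure ⟨0, rfl⟩

theorem image_closure_orbitOf_subset {X : Type*} [MetricSpace X] {f : X → X}
    (hf : Continuous f) (x : X) : f '' closure (orbitOf f x) ⊆ closure (orbitOf f x) := by
  refine (image_closure_subset_closure_image hf).trans (closure_mono ?_)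
  rintro _ ⟨_, ⟨n, rfl⟩, rfl⟩
  exact ⟨n + 1, Function.iterate_succ_apply' f n x⟩

/-- Every point of a minimal set is almost periodic, since its orbit closure is the whole set. -/
theorem MinimalSubset.almostPeriodicPt {X : Type*} [MetricSpace X] {f : X → X}
    (hf : Continuous f) {A : Set X} (hA : MinimalSubset f A) {x : X} (hx : x ∈ A) :
    AlmostPeriodicPt f x := by
  have hsub : closure (orbitOf f x) ⊆ A := by
    refine closure_minimal ?_ hA.2.1
    rintro _ ⟨n, rfl⟩
    exact (Set.mapsTo_iff_image_subset.mpr hA.2.2.1).iterate n hx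
  have h := hA.2.2.2 _ hsub ⟨x, mem_closure_orbitOf f x⟩ isClosed_closure
    (image_closure_orbitOf_subset hf x)
  rw [AlmostPeriodicPt, h]
  exact hA

theorem exists_minimalSubset {X : Type*} [MetricSpace X] [CompactSpace X] (f : X → X)
    {K : Set X} (hne : K.Nonempty) (hcl : IsClosed K) (hinv : f '' K ⊆ K) :
    ∃ A ⊆ K, MinimalSubset f A := by
  obtain ⟨A, hAK, hA⟩ := zorn_superset_nonempty
    {N : Set X | N.Nonempty ∧ IsClosed N ∧ f '' N ⊆ N} (fun c hc hchain hcne => by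
      refine ⟨⋂₀ c, ⟨?_, ?_, ?_⟩, fun s hs => sInter_subset_of_mem hs⟩
      · have := hcne.to_subtype
        have hdir : DirectedOn (fun a b : Set X => a ⊇ b) c := fun a ha b hb =>
          (hchain.total ha hb).elim (fun h => ⟨a, ha, subset_rfl, h⟩)
            (fun h => ⟨b, hb, h, subset_rfl⟩)
        rw [sInter_eq_iInter]
        exact IsCompact.nonempty_iInter_of_directed_nonempty_isCompact_isClosed _
          hdir.directed_val
          (fun i => (hc i.2).1) (fun i => (hc i.2).2.1.isCompact) (fun i => (hc i.2).2.1)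
      · exact isClosed_sInter fun s hs => (hc hs).2.1
      · rintro _ ⟨x, hx, rfl⟩ s hs
        exact (hc hs).2.2 ⟨x, hx s hs, rfl⟩) K ⟨hne, hcl, hinv⟩
  exact ⟨A, hAK, hA.prop.1, hA.prop.2.1, hA.prop.2.2,
    fun N hNA hN hNc hNi => hA.eq_of_subset ⟨hN, hNc, hNi⟩ hNA⟩

theorem almost_periodic_lifts {X Y : Type*} [MetricSpace X] [CompactSpace X]
    [MetricSpace Y] [CompactSpace Y]
    (f : X → X) (hf : Continuous f) (hfs : Function.Surjective f)
    (g : Y → Y) (hg : Continuous g) (hgs : Function.Surjective g)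
    (φ : X → Y) (hφ : Continuous φ) (hφs : Function.Surjective φ)
    (hcomm : φ ∘ f = g ∘ φ) (y₀ : Y) (hy : AlmostPeriodicPt g y₀) :
    ∃ x ∈ φ ⁻¹' {y₀}, AlmostPeriodicPt f x := by
  have hsemi : ∀ x, φ (f x) = g (φ x) := congrFun hcomm
  obtain ⟨hMne, hMcl, hMinv, hMmin⟩ := hy
  obtain ⟨A, hAK, hA⟩ := exists_minimalSubset f (K := φ ⁻¹' closure (orbitOf g y₀))
    (hMne.preimage hφs) (hMcl.preimage hφ) (by
      rintro _ ⟨x, hx, rfl⟩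
      rw [mem_preimage, hsemi]
      exact hMinv ⟨φ x, hx, rfl⟩)
  have himg : φ '' A = closure (orbitOf g y₀) := by
    refine hMmin _ (image_subset_iff.mpr hAK) (hA.1.image φ)
      (hA.2.1.isCompact.image hφ).isClosed ?_
    rintro _ ⟨_, ⟨x, hx, rfl⟩, rfl⟩
    exact ⟨f x, hA.2.2.1 ⟨x, hx, rfl⟩, hsemi x⟩
  obtain ⟨x, hxA, hxy⟩ : y₀ ∈ φ '' A := himg ▸ mem_closure_orbitOf g y₀
  exact ⟨x, hxy, hA.almostPeriodicPt hf hxA⟩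
end

section
/- Let (X,f) be a compact dynamical system and ε > 0. If a point x ∈ X is ε-sensitive, then every point of the orbit closure cl{f^n(x) : n ∈ ℕ} is (ε/2)-sensitive. -/
/-!
If `z` is not `(ε/2)`-sensitive, then some ball `B(z, δ)` stays within `ε/2` of the orbit of `z`
for all time, so any two of its points stay within `ε` of each other. As `z` lies in the orbit
closure of `x`, some `f^[m] x` lies in that ball. By continuity of the finitely many iterates
`f^[i]`, `i ≤ m`, every `y` close to `x` stays `ε`-close to `x` before time `m` and has
`f^[m] y ∈ B(z, δ)`, hence stays within `ε` of `x` from time `m` on. This contradicts the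
`ε`-sensitivity of `x`.
-/

open Filter Set Metric Topology

theorem sensitive_orbit_closure {X : Type*} [MetricSpace X] [CompactSpace X]
    (f : X → X) (hf : Continuous f) (hsurj : Function.Surjective f)
    (ε : ℝ) (hε : 0 < ε) (x : X) (hx : SensitivePt f ε x) :
    ∀ z ∈ closure (orbitOf f x), SensitivePt f (ε / 2) z := by
  intro z hz δ hδ
  by_contra! hcon
  obtain ⟨_, ⟨m, rfl⟩, hm⟩ := Metric.mem_closure_iff.mp hz δ hδ
  have hearly : ∀ᶠ y in 𝓝 x, ∀ i ∈ Finset.range m, dist (f^[i] x) (f^[i] y) < ε := by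
    rw [Filter.eventually_all_finset]
    intro i _
    have hc : Continuous fun y => dist (f^[i] x) (f^[i] y) :=
      continuous_const.dist (hf.iterate i)
    exact hc.continuousAt.eventually_lt continuousAt_const (by simpa using hε)
  have hball : ∀ᶠ y in 𝓝 x, dist z (f^[m] y) < δ :=
    (continuous_const.dist (hf.iterate m)).continuousAt.eventually_lt continuousAt_const hm
  obtain ⟨η, hη, hnear⟩ := Metric.eventually_nhds_iff.mp (hearly.and hball)
  obtain ⟨y, hy, n, hn⟩ := hx η hη
  obtain ⟨hy_early, hy_ball⟩ := hnear (by rwa [dist_comm])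
  rcases lt_or_ge n m with hnm | hmn
  · exact lt_asymm hn (hy_early n (Finset.mem_range.mpr hnm))
  · obtain ⟨k, rfl⟩ := Nat.exists_eq_add_of_le' hmn
    rw [Function.iterate_add_apply, Function.iterate_add_apply] at hn
    have h1 := hcon (f^[m] x) hm k
    have h2 := hcon (f^[m] y) hy_ball k
    have h3 := dist_triangle_left (f^[k] (f^[m] x)) (f^[k] (f^[m] y)) (f^[k] z)
    linarith
end

section
/- Let (X,f) be a minimal compact dynamical system. If some point of X is ε-sensitive for some ε > 0, then there is an ε' > 0 such that every point of X is ε'-sensitive; in particular (X,f) is sensitive. -/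
/-!
Sensitivity passes from one point to all points of a minimal system with the constant halved.
Suppose `x` is `ε`-sensitive but some `w` is not `ε/2`-sensitive, so that all iterates of the points
of some ball `B(w, δ)` stay `ε/2`-close to those of `w`. By minimality `f^[k] x ∈ B(w, δ)` for some
`k`. Points `y` near `x` also satisfy `f^[k] y ∈ B(w, δ)`, hence the orbits of `x` and `y` stay
`ε`-close from time `k` on by the triangle inequality through the orbit of `w`; the finitely many
times before `k` are handled by continuity. So `x` is not `ε`-sensitive, a contradiction.
-/


open Filter Set Metric Topology

/-- If the orbit closure of an `ε`-sensitive point `x` contains `w`, then `w` is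
`ε / 2`-sensitive. -/
lemma SensitivePt.half_of_mem_closure {X : Type*} [MetricSpace X] {f : X → X}
    (hf : Continuous f) {ε : ℝ} (hε : 0 < ε) {x w : X} (hx : SensitivePt f ε x)
    (hw : w ∈ closure (orbitOf f x)) : SensitivePt f (ε / 2) w := by
  by_contra hns
  unfold SensitivePt at hns
  push Not at hns
  obtain ⟨δ, hδ, hstable⟩ := hns
  obtain ⟨_, ⟨k, rfl⟩, hk⟩ := Metric.mem_closure_iff.1 hw δ hδ
  have hlate : ∀ᶠ y in 𝓝 x, dist w (f^[k] y) < δ :=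
    (continuous_const.dist (hf.iterate k)).continuousAt.eventually_lt continuousAt_const hk
  have hearly : ∀ᶠ y in 𝓝 x, ∀ n ∈ Finset.range k, dist (f^[n] x) (f^[n] y) < ε := by
    rw [Filter.eventually_all_finset]
    intro n _
    exact (continuous_const.dist (hf.iterate n)).continuousAt.eventually_lt continuousAt_const
      (by simpa using hε)
  obtain ⟨η, hη, hball⟩ := Metric.eventually_nhds_iff.1 (hlate.and hearly)
  obtain ⟨y, hxy, n, hn⟩ := hx η hη
  obtain ⟨hyk, hyn⟩ := hball (by rwa [dist_comm])
  rcases lt_or_ge n k with hnk | hkn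
  · exact absurd (hyn n (Finset.mem_range.2 hnk)) (not_lt.2 hn.le)
  · obtain ⟨m, rfl⟩ := Nat.exists_eq_add_of_le' hkn
    rw [Function.iterate_add_apply, Function.iterate_add_apply] at hn
    linarith [dist_triangle_left (f^[m] (f^[k] x)) (f^[m] (f^[k] y)) (f^[m] w),
      hstable _ hk m, hstable _ hyk m]

theorem minimal_sensitive_point {X : Type*} [MetricSpace X] [CompactSpace X]
    (f : X → X) (hf : Continuous f) (hsurj : Function.Surjective f)
    (hmin : MinimalSystem f)
    (h : ∃ ε > (0:ℝ), ∃ x : X, SensitivePt f ε x) :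
    (∃ ε' > (0:ℝ), ∀ x : X, SensitivePt f ε' x) ∧ Sensitive f := by
  obtain ⟨ε, hε, x, hx⟩ := h
  have hall : ∀ w : X, SensitivePt f (ε / 2) w := fun w =>
    hx.half_of_mem_closure hf hε (by rw [hmin x]; trivial)
  refine ⟨⟨ε / 2, half_pos hε, hall⟩, ε / 2, half_pos hε, ?_⟩
  rintro U hU ⟨w, hw⟩
  obtain ⟨δ, hδ, hball⟩ := Metric.isOpen_iff.1 hU w hw
  obtain ⟨y, hy, n, hn⟩ := hall w δ hδ
  exact ⟨w, hw, y, hball (by rwa [Metric.mem_ball, dist_comm]), n, hn⟩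
end

section
/- Auslander–Yorke dichotomy: every minimal compact dynamical system is either equicontinuous or sensitive. -/
/-!
Suppose `f` is not sensitive and fix `ε > 0`. Some nonempty open set `U` then has all its iterated
images of diameter at most `ε / 2`. By minimality the orbit of any point `x` enters `U`, say at
time `n`, and so do the points near `x`: their orbits stay `ε`-close to that of `x` from time `n`
on, while the finitely many earlier times are controlled by continuity. Hence the iterates are
equicontinuous at every point, and on a compact space pointwise equicontinuity is uniform.
-/

open Filter Set Metric Topology

theorem auslander_yorke_dichotomy {X : Type*} [MetricSpace X] [CompactSpace X]
    (f : X → X) (hf : Continuous f) (hsurj : Function.Surjective f)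
    (hmin : MinimalSystem f) :
    EquicontinuousSystem f ∨ Sensitive f := by
  by_cases hs : Sensitive f
  · exact Or.inr hs
  left
  have heq : Equicontinuous fun n : ℕ => f^[n] := by
    intro x
    rw [Metric.equicontinuousAt_iff_right]
    intro ε hε
    -- An open set on which all iterates oscillate by at most `ε / 2`, from non-sensitivity.
    obtain ⟨U, hUo, hUne, hU⟩ : ∃ U : Set X, IsOpen U ∧ U.Nonempty ∧
        ∀ y ∈ U, ∀ z ∈ U, ∀ n : ℕ, dist (f^[n] y) (f^[n] z) ≤ ε / 2 := by
      by_contra! h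
      exact hs ⟨ε / 2, half_pos hε, h⟩
    obtain ⟨_, hxU, n, rfl⟩ :=
      (dense_iff_closure_eq.2 (hmin x)).inter_open_nonempty U hUo hUne
    have hlate : ∀ᶠ y in 𝓝 x, f^[n] y ∈ U :=
      (hf.iterate n).continuousAt.eventually_mem (hUo.mem_nhds hxU)
    have hearly : ∀ᶠ y in 𝓝 x, ∀ m ∈ Finset.range n, dist (f^[m] x) (f^[m] y) < ε := by
      rw [Filter.eventually_all_finset]
      intro m _
      filter_upwards [(hf.iterate m).continuousAt.eventually_mem
        (Metric.ball_mem_nhds (f^[m] x) hε)] with y hy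
      rwa [Metric.mem_ball'] at hy
    filter_upwards [hlate, hearly] with y hyU hy m
    rcases lt_or_ge m n with hm | hm
    · exact hy m (Finset.mem_range.2 hm)
    · obtain ⟨k, rfl⟩ := Nat.exists_eq_add_of_le' hm
      rw [Function.iterate_add_apply, Function.iterate_add_apply]
      exact (hU _ hxU _ hyU k).trans_lt (half_lt_self hε)
  exact Metric.uniformEquicontinuous_iff.1
    (CompactSpace.uniformEquicontinuous_of_equicontinuous heq)
end

section
/- Let (X,f) be a compact dynamical system. If (X,f) is thickly syndetically sensitive then it is multi-sensitive, and if (X,f) is multi-sensitive then it is thickly sensitive. -/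
/-!
Every thickly syndetic set `S` contains intervals of each length `k` starting in a syndetic set
(`ThicklySyndetic.hasSyndeticRuns`), and this property passes to finite intersections: long
intervals of one set contain intervals of the other. Hence the separating times of finitely many
open sets have a common element, and thick syndetic sensitivity implies multi-sensitivity.

For the second implication, surjectivity gives `f^[m + j] '' (f^[j] ⁻¹' U) = f^[m] '' U`. A common
separating time `n` of `U, f⁻¹ U, …, f^{-k} U` therefore yields the separating times
`n, n - 1, …, n - k` of `U`, provided `n ≥ k`. Including one more open set, whose images under
`f^[j]` have diameter at most `δ` for all `j ≤ k`, forces `n > k`.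
-/

open Filter Set Metric Topology

/-- The set `S` contains intervals of every length, whose starting points form a syndetic set:
for each `k`, the set of `n` with `{n, …, n + k} ⊆ S` is syndetic. -/
def HasSyndeticRuns (S : Set ℕ) : Prop := ∀ k : ℕ, Syndetic {n | ∀ i ≤ k, n + i ∈ S}

theorem ThicklySyndetic.hasSyndeticRuns {S : Set ℕ} (hS : ThicklySyndetic S) :
    HasSyndeticRuns S := by
  intro k
  by_contra hns
  -- `C` is thick because its complement is not syndetic, and every `n ∈ C` is within `k` of `Sᶜ`,
  -- so `Sᶜ ∩ C = (Sᶜ ∪ Cᶜ) ∩ C` is a piecewise syndetic set disjoint from `S`.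
  set C : Set ℕ := {n | ∀ i ≤ k, n + i ∈ S}ᶜ with hC
  have hthick : Thick C := by
    intro M
    by_contra! h
    refine hns ⟨M, fun n => ?_⟩
    obtain ⟨i, hi, hin⟩ := h n
    exact ⟨i, hi, not_not.mp hin⟩
  have hsynd : Syndetic (Sᶜ ∪ Cᶜ) := by
    refine ⟨k, fun n => ?_⟩
    by_cases hn : n ∈ C
    · have hnC : ¬ ∀ i ≤ k, n + i ∈ S := hn
      push Not at hnC
      obtain ⟨i, hi, hin⟩ := hnC
      exact ⟨i, hi, Or.inl hin⟩
    · exact ⟨0, Nat.zero_le _, Or.inr hn⟩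
  obtain ⟨n, hnS, hn, hnC⟩ := hS _ ⟨_, C, hsynd, hthick, rfl⟩
  exact hn.elim (fun h => h hnS) (fun h => h hnC)

theorem HasSyndeticRuns.inter {S T : Set ℕ} (hS : HasSyndeticRuns S) (hT : HasSyndeticRuns T) :
    HasSyndeticRuns (S ∩ T) := by
  intro k
  obtain ⟨N, hN⟩ := hT k
  -- An interval of length `k + N` in `S` leaves room for the start of an interval in `T`.
  obtain ⟨M, hM⟩ := hS (k + N)
  refine ⟨M + N, fun n => ?_⟩
  obtain ⟨a, ha, hSa⟩ := hM n
  obtain ⟨b, hb, hTb⟩ := hN (n + a)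
  refine ⟨a + b, by omega, fun i hi => ⟨?_, ?_⟩⟩
  · have := hSa (b + i) (by omega)
    rwa [show n + (a + b) + i = n + a + (b + i) by omega]
  · have := hTb i hi
    rwa [show n + (a + b) + i = n + a + b + i by omega]

theorem HasSyndeticRuns.iInter {k : ℕ} (S : Fin k → Set ℕ) (hS : ∀ i, HasSyndeticRuns (S i)) :
    HasSyndeticRuns (⋂ i, S i) := by
  induction k with
  | zero => exact fun _ => ⟨0, fun n => ⟨0, le_rfl, by simp⟩⟩
  | succ k ih =>
    have h : (⋂ i, S i) = S 0 ∩ ⋂ i : Fin k, S i.succ := by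
      ext n
      simp [Fin.forall_fin_succ]
    rw [h]
    exact (hS 0).inter (ih _ fun i => hS i.succ)

theorem HasSyndeticRuns.nonempty {S : Set ℕ} (hS : HasSyndeticRuns S) : S.Nonempty := by
  obtain ⟨M, hM⟩ := hS 0
  obtain ⟨i, -, hi⟩ := hM 0
  exact ⟨_, hi 0 le_rfl⟩

theorem mem_sepTimes_of_preimage {X : Type*} [MetricSpace X] {f : X → X}
    (hsurj : Function.Surjective f) {δ : ℝ} {U : Set X} {m j : ℕ}
    (h : m + j ∈ SepTimes f δ (f^[j] ⁻¹' U)) : m ∈ SepTimes f δ U := by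
  have hdiam : Metric.diam (f^[m + j] '' (f^[j] ⁻¹' U)) > δ := h
  rwa [Function.iterate_add, Set.image_comp, Set.image_preimage_eq _ (hsurj.iterate j)] at hdiam

/-- Around any point there is an open set with no separating times up to `k`. -/
theorem exists_open_sepTimes_gt {X : Type*} [MetricSpace X] {f : X → X} (hf : Continuous f)
    {δ : ℝ} (hδ : 0 < δ) (x : X) (k : ℕ) :
    ∃ V : Set X, IsOpen V ∧ x ∈ V ∧ ∀ n ∈ SepTimes f δ V, k < n := by
  refine ⟨⋂ j ∈ Finset.range (k + 1), f^[j] ⁻¹' Metric.ball (f^[j] x) (δ / 2),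
    isOpen_biInter_finset fun j _ => Metric.isOpen_ball.preimage (hf.iterate j), ?_, ?_⟩
  · simp [hδ]
  · intro n hn
    by_contra! hnk
    refine absurd (show Metric.diam _ > δ from hn) (not_lt.mpr ?_)
    refine (Metric.diam_mono (t := Metric.ball (f^[n] x) (δ / 2)) ?_ Metric.isBounded_ball).trans
      ((Metric.diam_ball (by linarith)).trans (by linarith))
    rintro _ ⟨y, hy, rfl⟩
    exact Set.mem_iInter₂.mp hy n (Finset.mem_range.mpr (by omega))

theorem thickly_syndetic_to_multi_to_thick {X : Type*} [MetricSpace X]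
    [CompactSpace X] (f : X → X) (hf : Continuous f) (hsurj : Function.Surjective f) :
    (ThicklySyndeticallySensitive f → MultiSensitive f) ∧
    (MultiSensitive f → ThicklySensitive f) := by
  constructor
  · rintro ⟨δ, hδ, h⟩
    exact ⟨δ, hδ, fun k U hU hne => (HasSyndeticRuns.iInter _ fun i =>
      (h (U i) (hU i) (hne i)).hasSyndeticRuns).nonempty⟩
  · rintro ⟨δ, hδ, h⟩
    refine ⟨δ, hδ, fun U hU hne k => ?_⟩
    obtain ⟨x, -⟩ := id hne
    obtain ⟨V, hV, hxV, hVn⟩ := exists_open_sepTimes_gt hf hδ x k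
    obtain ⟨n, hn⟩ := h (k + 1) (fun i => if i.1 ≤ k then f^[i.1] ⁻¹' U else V)
      (fun i => by
        split_ifs
        exacts [hU.preimage (hf.iterate _), hV])
      (fun i => by
        split_ifs
        exacts [hne.preimage (hsurj.iterate _), ⟨x, hxV⟩])
    rw [Set.mem_iInter] at hn
    have hkn : k < n := hVn n (by simpa using hn (Fin.last (k + 1)))
    refine ⟨n - k, fun i hi => mem_sepTimes_of_preimage (j := k - i) hsurj ?_⟩
    have := hn ⟨k - i, by omega⟩
    rw [if_pos (by simp)] at this
    rwa [show n - k + i + (k - i) = n by omega]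
end

section
/- Let (X,f) be a topologically transitive compact dynamical system. Then (X,f) is multi-sensitive if and only if it is thickly sensitive. -/
/-!
By transitivity, a point can be steered through finitely many nonempty open sets `U i` at suitable
times `m i`, so some nonempty open `W` satisfies `f^[m i] '' W ⊆ U i` for all `i`. A block of
consecutive separating times of `W` longer than all the `m i`, starting at `n`, makes `n` a common
separating time of the `U i`. Hence thick sensitivity gives multi-sensitivity, with the same constant.

Conversely, surjectivity gives `f^[n] '' (f^[i] ⁻¹' U) = f^[n - i] '' U` for `i ≤ n`, so a common
separating time `n ≥ k` of the preimages `f^[i] ⁻¹' U`, `i ≤ k`, yields the block `n - k, …, n` of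
separating times of `U`. To force `n ≥ k`, the family is enlarged by an open set whose first
`k` iterates all have small diameter.
-/

open Filter Set Metric Topology

/-- A transitive system can be steered through any finite family of nonempty open sets: some
nonempty open set is mapped into each `U i` by a suitable iterate. -/
lemma exists_open_image_subset {X : Type*} [MetricSpace X] {f : X → X} (hf : Continuous f)
    (htrans : TopTransitive f) [Nonempty X] {ι : Type*} (s : Finset ι) (U : ι → Set X)
    (hU : ∀ i, IsOpen (U i)) (hne : ∀ i, (U i).Nonempty) :
    ∃ (W : Set X) (m : ι → ℕ), IsOpen W ∧ W.Nonempty ∧ ∀ i ∈ s, f^[m i] '' W ⊆ U i := by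
  classical
  induction s using Finset.induction_on with
  | empty => exact ⟨Set.univ, fun _ => 0, isOpen_univ, Set.univ_nonempty, by simp⟩
  | insert a s ha ih =>
    obtain ⟨W, m, hWo, hWn, hW⟩ := ih
    obtain ⟨n, _, ⟨x, hx, rfl⟩, hxU⟩ := htrans W (U a) hWo (hU a) hWn (hne a)
    refine ⟨W ∩ f^[n] ⁻¹' U a, Function.update m a n,
      hWo.inter ((hU a).preimage (hf.iterate n)), ⟨x, hx, hxU⟩, ?_⟩
    intro i hi
    by_cases h : i = a
    · subst h
      rintro _ ⟨y, hy, rfl⟩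
      simpa using hy.2
    · rw [Function.update_of_ne h]
      exact (Set.image_mono Set.inter_subset_left).trans
        (hW i (Finset.mem_of_mem_insert_of_ne hi h))

/-- Each point has an open neighbourhood all of whose separating times are at least `k`. -/
lemma exists_open_sepTimes_ge {X : Type*} [MetricSpace X] {f : X → X} (hf : Continuous f)
    {δ : ℝ} (hδ : 0 < δ) (x : X) (k : ℕ) :
    ∃ V : Set X, IsOpen V ∧ x ∈ V ∧ ∀ n ∈ SepTimes f δ V, k ≤ n := by
  refine ⟨⋂ j ∈ Finset.range k, f^[j] ⁻¹' Metric.ball (f^[j] x) (δ / 2),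
    isOpen_biInter_finset fun j _ => Metric.isOpen_ball.preimage (hf.iterate j), ?_, ?_⟩
  · simp [hδ]
  · intro n hn
    by_contra! hlt
    have hsub : f^[n] '' (⋂ j ∈ Finset.range k, f^[j] ⁻¹' Metric.ball (f^[j] x) (δ / 2)) ⊆
        Metric.ball (f^[n] x) (δ / 2) := by
      rintro _ ⟨y, hy, rfl⟩
      exact Set.mem_iInter₂.1 hy n (Finset.mem_range.2 hlt)
    have h1 := Metric.diam_mono hsub Metric.isBounded_ball
    have h2 := Metric.diam_ball (x := f^[n] x) (half_pos hδ).le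
    have h3 : Metric.diam (f^[n] '' _) > δ := hn
    linarith

theorem multi_sensitive_iff_thickly_sensitive {X : Type*} [MetricSpace X]
    [CompactSpace X] (f : X → X) (hf : Continuous f) (hsurj : Function.Surjective f)
    (htrans : TopTransitive f) :
    MultiSensitive f ↔ ThicklySensitive f := by
  constructor
  · rintro ⟨δ, hδ, H⟩
    refine ⟨δ, hδ, fun U hU hne k => ?_⟩
    obtain ⟨x, hx⟩ := hne
    obtain ⟨V, hVo, hxV, hV⟩ := exists_open_sepTimes_ge hf hδ x k
    obtain ⟨n, hn⟩ := H (k + 1)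
      (Fin.cons V fun i : Fin (k + 1) => f^[(i : ℕ)] ⁻¹' U)
      (Fin.cases hVo fun i => hU.preimage (hf.iterate i))
      (Fin.cases ⟨x, hxV⟩ fun i => Set.Nonempty.preimage ⟨x, hx⟩ (hsurj.iterate i))
    rw [Set.mem_iInter] at hn
    have hk : k ≤ n := hV n (hn 0)
    refine ⟨n - k, fun i hi => ?_⟩
    have h : Metric.diam (f^[n] '' (f^[k - i] ⁻¹' U)) > δ :=
      hn (Fin.succ ⟨k - i, by omega⟩)
    have hsplit : n = (n - k + i) + (k - i) := by omega
    rw [hsplit, Function.iterate_add, Set.image_comp,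
      Set.image_preimage_eq _ (hsurj.iterate _)] at h
    exact h
  · rintro ⟨δ, hδ, H⟩
    refine ⟨δ, hδ, fun k U hU hne => ?_⟩
    have : Nonempty X := (hne 0).to_type
    obtain ⟨W, m, hWo, hWn, hW⟩ := exists_open_image_subset hf htrans Finset.univ U hU hne
    obtain ⟨n, hn⟩ := H W hWo hWn (Finset.univ.sup m)
    refine ⟨n, Set.mem_iInter.2 fun i => ?_⟩
    have h : Metric.diam (f^[n + m i] '' W) > δ := hn (m i) (Finset.le_sup (Finset.mem_univ i))
    rw [Function.iterate_add, Set.image_comp] at h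
    exact h.trans_le (Metric.diam_mono (Set.image_mono (hW i (Finset.mem_univ i)))
      (isCompact_univ.isBounded.subset (Set.subset_univ _)))
end

section
/- Let (X,f) be a minimal compact dynamical system. Then the following are equivalent: (i) (X,f) is thickly sensitive; (ii) (X,f) is thickly syndetically sensitive; (iii) (X,f) is multi-sensitive; (iv) (X,f) is IP sensitive. -/
/-!
Write `N_δ(U)` for `SepTimes f δ U`. Everything rests on a density observation: in a minimal system
the points of a single orbit are dense in every finite power of `X`, so finitely many separations
`dist (fⁿⁱ xᵢ) (fⁿⁱ yᵢ) > δ` with `xᵢ, yᵢ ∈ Uᵢ` can be realised by `xᵢ = f^{aᵢ} z`, `yᵢ = f^{bᵢ} z`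
for all `z` in one nonempty open set `Ω`. If both `z` and `fᵐ z` lie in `Ω`, then
`nᵢ + m ∈ N_δ(Uᵢ)` for every `i` (`exists_return_set`). Hence separation patterns recur with the
return times of `Ω`.

* Thick implies thickly syndetic: return times of a point to `Ω` are syndetic, so a block
  `[n, n + K] ⊆ N_δ(U)` recurs along a syndetic set of translates.
* IP implies multi: return times of `Ω` to itself meet every IP-set (pigeonhole on partial sums).
  If `n` separates `U₁, …, U_k`, then `fⁿ(U₀)` contains a nonempty open set `O`, because minimal
  maps are irreducible, and some `m ∈ N_δ(O)` is a return time of `Ω`; thus `n + m` separates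
  `U₀, …, U_k`.
* Multi implies thick: apply multi-sensitivity to `U, f⁻¹U, …, f⁻ᵏU` and a small set which is not
  separated at any time up to `k`.
* Thick sets are IP-sets and thickly syndetic sets are thick, by pure combinatorics.
-/

open Filter Set Metric Topology

/-! ### Families of subsets of ℕ -/

lemma Thick.ipSet {S : Set ℕ} (hS : Thick S) : IPSet S := by
  choose g hg using hS
  -- `s k` is the sum of the first `k` terms `g (s i)`, so each new term absorbs all earlier sums
  let s : ℕ → ℕ := fun k => Nat.rec 0 (fun _ t => t + g t) k
  have hs : ∀ k, ∑ i ∈ Finset.range k, g (s i) = s k := by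
    intro k
    induction k with
    | zero => rfl
    | succ k ih => rw [Finset.sum_range_succ, ih]
  refine ⟨fun k => g (s k), fun F hF => ?_⟩
  have hm := F.max'_mem hF
  rw [← Finset.add_sum_erase F _ hm]
  refine hg _ _ ?_
  rw [← hs (F.max' hF)]
  refine Finset.sum_le_sum_of_subset fun i hi => ?_
  rw [Finset.mem_erase] at hi
  exact Finset.mem_range.2 (lt_of_le_of_ne (F.le_max' i hi.2) hi.1)

lemma ThicklySyndetic.thick {S : Set ℕ} (hS : ThicklySyndetic S) : Thick S := by
  by_contra h
  simp only [Thick, not_forall, not_exists] at h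
  obtain ⟨k, hk⟩ := h
  have hsyn : Syndetic Sᶜ := ⟨k, fun n => by
    obtain ⟨i, hi, hn⟩ := hk n
    exact ⟨i, hi, hn⟩⟩
  obtain ⟨n, h1, h2⟩ := hS Sᶜ ⟨Sᶜ, univ, hsyn, fun k => ⟨0, fun _ _ => mem_univ _⟩, by simp⟩
  exact h2 h1

/-- The easy half of the usual description of thickly syndetic sets: blocks of each length
starting along a syndetic set. -/
lemma thicklySyndetic_of_blocks {S : Set ℕ}
    (hS : ∀ K, Syndetic {m | ∀ i ≤ K, m + i ∈ S}) : ThicklySyndetic S := by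
  rintro T ⟨A, B, ⟨M, hA⟩, hB, rfl⟩
  obtain ⟨L, hL⟩ := hS M
  obtain ⟨n, hn⟩ := hB (L + M)
  obtain ⟨j, hj, hjS⟩ := hL n
  obtain ⟨i, hi, hiA⟩ := hA (n + j)
  refine ⟨n + j + i, hjS i hi, hiA, ?_⟩
  rw [add_assoc]
  exact hn _ (by omega)

/-! ### Minimal systems -/

section MinimalAux

variable {X : Type*} [MetricSpace X] {f : X → X}

lemma MinimalSystem.denseRange (hmin : MinimalSystem f) (x : X) :
    DenseRange fun n : ℕ => f^[n] x :=
  dense_iff_closure_eq.2 (hmin x)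

variable [CompactSpace X]

lemma mem_sepTimes_iff {δ : ℝ} (hδ : 0 < δ) {U : Set X} {n : ℕ} :
    n ∈ SepTimes f δ U ↔ ∃ x ∈ U, ∃ y ∈ U, δ < dist (f^[n] x) (f^[n] y) := by
  constructor
  · intro h
    by_contra! hcon
    refine absurd (Metric.diam_le_of_forall_dist_le hδ.le ?_) (not_le.2 h)
    rintro _ ⟨x, hx, rfl⟩ _ ⟨y, hy, rfl⟩
    exact hcon x hx y hy
  · rintro ⟨x, hx, y, hy, h⟩
    exact h.trans_le (Metric.dist_le_diam_of_mem (isCompact_univ.isBounded.subset (subset_univ _))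
      (mem_image_of_mem _ hx) (mem_image_of_mem _ hy))

/-- In a minimal system every point visits a given nonempty open set within uniformly bounded
time. -/
lemma MinimalSystem.exists_bound (hf : Continuous f) (hmin : MinimalSystem f) {Ω : Set X}
    (hΩ : IsOpen Ω) (hne : Ω.Nonempty) : ∃ M : ℕ, ∀ z, ∃ r ≤ M, f^[r] z ∈ Ω := by
  obtain ⟨t, ht⟩ := isCompact_univ.elim_finite_subcover (fun r : ℕ => f^[r] ⁻¹' Ω)
    (fun r => hΩ.preimage (hf.iterate r)) (fun z _ => by
      obtain ⟨r, hr⟩ := (hmin.denseRange z).exists_mem_open hΩ hne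
      exact mem_iUnion.2 ⟨r, hr⟩)
  refine ⟨t.sup id, fun z => ?_⟩
  obtain ⟨r, hr, hz⟩ := mem_iUnion₂.1 (ht (mem_univ z))
  exact ⟨r, Finset.le_sup (f := id) hr, hz⟩

/-- A minimal map is irreducible: no proper closed subset is mapped onto the space. Otherwise
backward orbits inside `C` would yield, by compactness, a whole forward orbit inside `C`. -/
lemma MinimalSystem.image_ne_univ (hf : Continuous f) (hmin : MinimalSystem f) {C : Set X}
    (hC : IsClosed C) (hne : C ≠ univ) : f '' C ≠ univ := by
  intro himg
  have : Nonempty X := by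
    by_contra h
    rw [not_nonempty_iff] at h
    exact hne (Subsingleton.elim _ _)
  let D : ℕ → Set X := fun n => ⋂ i ≤ n, f^[i] ⁻¹' C
  have hDc : ∀ n, IsClosed (D n) := fun n =>
    isClosed_biInter fun i _ => hC.preimage (hf.iterate i)
  have hback : ∀ n : ℕ, ∀ y : X, ∃ x, f^[n + 1] x = y ∧ ∀ i ≤ n, f^[i] x ∈ C := by
    intro n
    induction n with
    | zero =>
      intro y
      obtain ⟨x, hx, rfl⟩ := himg.ge (mem_univ y)
      exact ⟨x, rfl, fun i hi => by simpa [Nat.le_zero.1 hi] using hx⟩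
    | succ n ih =>
      intro y
      obtain ⟨x, hx, rfl⟩ := himg.ge (mem_univ y)
      obtain ⟨w, hw, hwC⟩ := ih x
      refine ⟨w, by rw [Function.iterate_succ_apply', hw], fun i hi => ?_⟩
      rcases Nat.le_succ_iff.1 hi with h | rfl
      · exact hwC i h
      · rwa [hw]
  have hDne : ∀ n, (D n).Nonempty := fun n => by
    obtain ⟨x, -, hx⟩ := hback n (Classical.arbitrary X)
    exact ⟨x, mem_iInter₂.2 hx⟩
  obtain ⟨x, hx⟩ := IsCompact.nonempty_iInter_of_sequence_nonempty_isCompact_isClosed D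
    (fun n => biInter_subset_biInter_left fun i (hi : i ≤ n) => Nat.le_succ_of_le hi)
    hDne (hDc 0).isCompact hDc
  have horb : ∀ n, f^[n] x ∈ C := fun n => mem_iInter₂.1 (mem_iInter.1 hx n) n le_rfl
  obtain ⟨n, hn⟩ := (hmin.denseRange x).exists_mem_open hC.isOpen_compl (nonempty_compl.2 hne)
  exact hn (horb n)

lemma MinimalSystem.exists_open_subset_image (hf : Continuous f) (hsurj : Function.Surjective f)
    (hmin : MinimalSystem f) (n : ℕ) {U : Set X} (hU : IsOpen U) (hne : U.Nonempty) :
    ∃ O : Set X, IsOpen O ∧ O.Nonempty ∧ O ⊆ f^[n] '' U := by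
  induction n with
  | zero => exact ⟨U, hU, hne, by simp⟩
  | succ n ih =>
    obtain ⟨O, hO, hOne, hOU⟩ := ih
    have hcl : IsClosed (f '' Oᶜ) := (hO.isClosed_compl.isCompact.image hf).isClosed
    refine ⟨(f '' Oᶜ)ᶜ, hcl.isOpen_compl, nonempty_compl.2
      (hmin.image_ne_univ hf hO.isClosed_compl fun h => ?_), fun y hy => ?_⟩
    · exact hOne.ne_empty (compl_univ_iff.1 h)
    · obtain ⟨x, rfl⟩ := hsurj y
      have hxO : x ∈ O := by
        by_contra hx
        exact hy (mem_image_of_mem f hx)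
      obtain ⟨w, hw, rfl⟩ := hOU hxO
      exact ⟨w, hw, Function.iterate_succ_apply' f n w⟩

/-- Finitely many separations are reproduced, after a common delay `m`, by every return of a
suitable open set `Ω` to itself at time `m`. -/
lemma MinimalSystem.exists_return_set [Nonempty X] (hf : Continuous f) (hmin : MinimalSystem f)
    {δ : ℝ} (hδ : 0 < δ) {ι : Type*} [Finite ι] (U : ι → Set X) (hU : ∀ i, IsOpen (U i))
    (n : ι → ℕ) (hn : ∀ i, n i ∈ SepTimes f δ (U i)) :
    ∃ Ω : Set X, IsOpen Ω ∧ Ω.Nonempty ∧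
      ∀ m z, z ∈ Ω → f^[m] z ∈ Ω → ∀ i, n i + m ∈ SepTimes f δ (U i) := by
  obtain ⟨x⟩ := ‹Nonempty X›
  have hab : ∀ i, ∃ a b : ℕ, f^[a] x ∈ U i ∧ f^[b] x ∈ U i ∧
      δ < dist (f^[n i] (f^[a] x)) (f^[n i] (f^[b] x)) := by
    intro i
    obtain ⟨u, hu, v, hv, huv⟩ := (mem_sepTimes_iff hδ).1 (hn i)
    have hfi := hf.iterate (n i)
    have hopen : IsOpen ((U i ×ˢ U i) ∩ {p : X × X | δ < dist (f^[n i] p.1) (f^[n i] p.2)}) :=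
      ((hU i).prod (hU i)).inter (isOpen_lt continuous_const (by fun_prop))
    obtain ⟨⟨a, b⟩, ⟨h1, h2⟩, h3⟩ :=
      ((hmin.denseRange x).prodMap (hmin.denseRange x)).exists_mem_open hopen
        ⟨(u, v), ⟨hu, hv⟩, huv⟩
    exact ⟨a, b, h1, h2, h3⟩
  choose a b ha hb hd using hab
  refine ⟨⋂ i, {z | f^[a i] z ∈ U i ∧ f^[b i] z ∈ U i ∧
      δ < dist (f^[n i] (f^[a i] z)) (f^[n i] (f^[b i] z))}, ?_, ⟨x, ?_⟩, ?_⟩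
  · refine isOpen_iInter_of_finite fun i => ?_
    have h1 := hf.iterate (a i)
    have h2 := hf.iterate (b i)
    have h3 := hf.iterate (n i)
    exact ((hU i).preimage h1).inter (((hU i).preimage h2).inter
      (isOpen_lt continuous_const ((h3.comp h1).dist (h3.comp h2))))
  · exact mem_iInter.2 fun i => ⟨ha i, hb i, hd i⟩
  · intro m z hz hmz i
    obtain ⟨h1, h2, -⟩ := mem_iInter.1 hz i
    obtain ⟨-, -, h3⟩ := mem_iInter.1 hmz i
    refine (mem_sepTimes_iff hδ).2 ⟨_, h1, _, h2, ?_⟩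
    simp only [← Function.iterate_add_apply] at h3 ⊢
    convert h3 using 3 <;> omega

/-- The return times of a nonempty open set to itself meet every IP-set. -/
lemma MinimalSystem.exists_return_mem_ipSet [Nonempty X] (hf : Continuous f)
    (hmin : MinimalSystem f) {Ω : Set X} (hΩ : IsOpen Ω) (hne : Ω.Nonempty) {S : Set ℕ}
    (hS : IPSet S) : ∃ m ∈ S, ∃ z ∈ Ω, f^[m] z ∈ Ω := by
  obtain ⟨seq, hseq⟩ := hS
  obtain ⟨M, hM⟩ := hmin.exists_bound hf hΩ hne
  let x : X := Classical.arbitrary X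
  let p : ℕ → ℕ := fun k => ∑ i ∈ Finset.range k, seq i
  choose r hrM hr using fun k => hM (f^[p k] x)
  -- two partial sums with the same delay `r`; their difference is a sum of consecutive terms
  obtain ⟨i, j, hij, hrij⟩ : ∃ i j, i < j ∧ r i = r j := by
    obtain ⟨i, j, hne, h⟩ := Finite.exists_ne_map_eq_of_infinite
      (fun k => (⟨r k, Nat.lt_succ_of_le (hrM k)⟩ : Fin (M + 1)))
    have h' : r i = r j := congrArg Fin.val h
    rcases lt_or_gt_of_ne hne with h1 | h1
    exacts [⟨i, j, h1, h'⟩, ⟨j, i, h1, h'.symm⟩]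
  refine ⟨∑ k ∈ Finset.Ico i j, seq k, hseq _ (Finset.nonempty_Ico.2 hij), _, hr i, ?_⟩
  have hsum : p i + ∑ k ∈ Finset.Ico i j, seq k = p j := Finset.sum_range_add_sum_Ico _ hij.le
  have hrj := hr j
  simp only [← Function.iterate_add_apply] at hrj ⊢
  rw [← hrij, ← hsum] at hrj
  convert hrj using 2
  omega

/-! ### The implications between the sensitivities -/

lemma MinimalSystem.blocks_syndetic (hf : Continuous f) (hmin : MinimalSystem f)
    {δ : ℝ} (hδ : 0 < δ) {U : Set X} (hU : IsOpen U) (hne : U.Nonempty)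
    (hT : Thick (SepTimes f δ U)) (K : ℕ) :
    Syndetic {m | ∀ i ≤ K, m + i ∈ SepTimes f δ U} := by
  have : Nonempty X := hne.to_type
  obtain ⟨n, hn⟩ := hT K
  obtain ⟨Ω, hΩ, ⟨z, hz⟩, hret⟩ := hmin.exists_return_set hf hδ (fun _ : Fin (K + 1) => U)
    (fun _ => hU) (fun i => n + i) (fun i => hn i (Nat.le_of_lt_succ i.2))
  obtain ⟨M, hM⟩ := hmin.exists_bound hf hΩ ⟨z, hz⟩
  refine ⟨M + n, fun m => ?_⟩
  obtain ⟨r, hr, hrΩ⟩ := hM (f^[m] z)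
  rw [← Function.iterate_add_apply] at hrΩ
  refine ⟨r + n, by omega, fun i hi => ?_⟩
  have h := hret _ z hz hrΩ ⟨i, Nat.lt_succ_of_le hi⟩
  have e : m + (r + n) + i = n + i + (r + m) := by omega
  rw [e]
  exact h

lemma MinimalSystem.multiSensitive_of_ipSensitive (hf : Continuous f)
    (hsurj : Function.Surjective f) (hmin : MinimalSystem f) (h : IPSensitive f) :
    MultiSensitive f := by
  obtain ⟨δ, hδ, h⟩ := h
  have key : ∀ k : ℕ, ∀ U : Fin k → Set X, (∀ i, IsOpen (U i)) → (∀ i, (U i).Nonempty) →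
      ∃ n, ∀ i, n ∈ SepTimes f δ (U i) := by
    intro k
    induction k with
    | zero => exact fun U _ _ => ⟨0, fun i => i.elim0⟩
    | succ k ih =>
      intro U hU hne
      have : Nonempty X := (hne 0).to_type
      obtain ⟨n, hn⟩ := ih (fun i => U i.succ) (fun i => hU _) (fun i => hne _)
      obtain ⟨Ω, hΩ, hΩne, hret⟩ := hmin.exists_return_set hf hδ (fun i : Fin k => U i.succ)
        (fun i => hU _) (fun _ => n) hn
      obtain ⟨O, hO, hOne, hOU⟩ := hmin.exists_open_subset_image hf hsurj n (hU 0) (hne 0)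
      obtain ⟨m, hm, z, hz, hmz⟩ := hmin.exists_return_mem_ipSet hf hΩ hΩne (h O hO hOne)
      refine ⟨n + m, Fin.cases ?_ (hret m z hz hmz)⟩
      obtain ⟨u, hu, v, hv, huv⟩ := (mem_sepTimes_iff hδ).1 hm
      obtain ⟨u, hu', rfl⟩ := hOU hu
      obtain ⟨v, hv', rfl⟩ := hOU hv
      refine (mem_sepTimes_iff hδ).2 ⟨u, hu', v, hv', ?_⟩
      rwa [← Function.iterate_add_apply, ← Function.iterate_add_apply, add_comm m n] at huv
  refine ⟨δ, hδ, fun k U hU hne => ?_⟩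
  obtain ⟨n, hn⟩ := key _ U hU hne
  exact ⟨n, mem_iInter.2 hn⟩

/-- This implication needs no minimality. -/
lemma thicklySensitive_of_multiSensitive (hf : Continuous f) (hsurj : Function.Surjective f)
    (h : MultiSensitive f) : ThicklySensitive f := by
  obtain ⟨δ, hδ, h⟩ := h
  refine ⟨δ, hδ, fun U hU hne k => ?_⟩
  obtain ⟨x, hx⟩ := hne
  -- `W` is not separated at any time `≤ k`, which forces the common separation time past `k`
  let W : Set X := ⋂ i : Fin (k + 1), {y | dist (f^[i] y) (f^[i] x) < δ / 2}
  have hWo : IsOpen W := isOpen_iInter_of_finite fun i =>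
    isOpen_lt ((hf.iterate i).dist continuous_const) continuous_const
  have hWx : x ∈ W := mem_iInter.2 fun i => by simpa using hδ
  let V : Fin (k + 1 + 1) → Set X := Fin.cons W fun i : Fin (k + 1) => f^[i] ⁻¹' U
  obtain ⟨n, hn⟩ := h (k + 1) V
    (Fin.cases hWo fun i => hU.preimage (hf.iterate i))
    (Fin.cases ⟨x, hWx⟩ fun i => by
      obtain ⟨y, hy⟩ := hsurj.iterate i x
      exact ⟨y, show f^[i] y ∈ U by rwa [hy]⟩)
  rw [mem_iInter] at hn
  have hnk : k < n := by
    by_contra! hle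
    obtain ⟨u, hu, v, hv, huv⟩ := (mem_sepTimes_iff hδ).1 (hn 0)
    have h1 : dist (f^[n] u) (f^[n] x) < δ / 2 := mem_iInter.1 hu ⟨n, Nat.lt_succ_of_le hle⟩
    have h2 : dist (f^[n] v) (f^[n] x) < δ / 2 := mem_iInter.1 hv ⟨n, Nat.lt_succ_of_le hle⟩
    linarith [dist_triangle_right (f^[n] u) (f^[n] v) (f^[n] x)]
  refine ⟨n - k, fun i hi => ?_⟩
  obtain ⟨u, hu, v, hv, huv⟩ :=
    (mem_sepTimes_iff hδ).1 (hn (Fin.succ ⟨k - i, by omega⟩))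
  refine (mem_sepTimes_iff hδ).2 ⟨f^[k - i] u, hu, f^[k - i] v, hv, ?_⟩
  rw [← Function.iterate_add_apply, ← Function.iterate_add_apply]
  have e : n - k + i + (k - i) = n := by omega
  rwa [e]

end MinimalAux

theorem minimal_sensitivities_tfae {X : Type*} [MetricSpace X] [CompactSpace X]
    (f : X → X) (hf : Continuous f) (hsurj : Function.Surjective f)
    (hmin : MinimalSystem f) :
    List.TFAE [ThicklySensitive f, ThicklySyndeticallySensitive f,
      MultiSensitive f, IPSensitive f] := by
  tfae_have 1 → 2 := fun ⟨δ, hδ, h⟩ => ⟨δ, hδ, fun U hU hne =>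
    thicklySyndetic_of_blocks (hmin.blocks_syndetic hf hδ hU hne (h U hU hne))⟩
  tfae_have 2 → 1 := fun ⟨δ, hδ, h⟩ => ⟨δ, hδ, fun U hU hne => (h U hU hne).thick⟩
  tfae_have 1 → 4 := fun ⟨δ, hδ, h⟩ => ⟨δ, hδ, fun U hU hne => (h U hU hne).ipSet⟩
  tfae_have 4 → 3 := hmin.multiSensitive_of_ipSensitive hf hsurj
  tfae_have 3 → 1 := thicklySensitive_of_multiSensitive hf hsurj
  tfae_finish
end

section
/- Let π : (X,f) → (Y,g) be a factor map between compact dynamical systems which is almost open, and let 𝔉 be a family of subsets of ℕ. If (Y,g) is 𝔉-sensitive then (X,f) is 𝔉-sensitive. -/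
/-!
The sensitivity constant transfers by uniform continuity of `π`. If `π` maps points at distance
less than `η` to points at distance less than `ε`, then, since `π (fⁿ U) = gⁿ (π U)` contains
`gⁿ (interior (π U))`, a set `fⁿ U` of diameter at most `η / 2` forces `gⁿ (interior (π U))` to have
diameter at most `ε`. Contrapositively, every `ε`-separating time of `interior (π U)` is an
`η / 2`-separating time of `U`. Almost openness makes that interior a legitimate test set for the
sensitivity of `g`, and heredity of the family concludes.
-/

open Filter Set Metric Topology

theorem fSensitive_lifts_almost_open {X Y : Type*} [MetricSpace X] [CompactSpace X]
    [MetricSpace Y] [CompactSpace Y]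
    (f : X → X) (hf : Continuous f) (hfs : Function.Surjective f)
    (g : Y → Y) (hg : Continuous g) (hgs : Function.Surjective g)
    (π : X → Y) (hπ : Continuous π) (hπs : Function.Surjective π)
    (hcomm : π ∘ f = g ∘ π)
    (hao : ∀ U : Set X, IsOpen U → U.Nonempty → (interior (π '' U)).Nonempty)
    (𝓕 : Set (Set ℕ)) (hher : ∀ F₁ F₂ : Set ℕ, F₁ ⊆ F₂ → F₁ ∈ 𝓕 → F₂ ∈ 𝓕)
    (h : FSensitive g 𝓕) : FSensitive f 𝓕 := by
  obtain ⟨ε, hε, hs⟩ := h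
  obtain ⟨η, hη, huc⟩ := Metric.uniformContinuous_iff.1
    (CompactSpace.uniformContinuous_of_continuous hπ) ε hε
  have hsemi : Function.Semiconj π f g := fun x => congrFun hcomm x
  -- Separation is strict, so it only yields distances `≤ δ`; halving `η` keeps them below `η`.
  refine ⟨η / 2, half_pos hη, fun U hU hne =>
    hher _ _ ?_ (hs (interior (π '' U)) isOpen_interior (hao U hU hne))⟩
  intro n hn
  simp only [SepTimes, mem_ofPred_eq] at hn ⊢
  contrapose! hn
  refine Metric.diam_le_of_forall_dist_le hε.le ?_
  rintro _ ⟨a, ha, rfl⟩ _ ⟨b, hb, rfl⟩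
  obtain ⟨u, hu, rfl⟩ := interior_subset ha
  obtain ⟨v, hv, rfl⟩ := interior_subset hb
  rw [← (hsemi.iterate_right n).eq u, ← (hsemi.iterate_right n).eq v]
  have hdist : dist (f^[n] u) (f^[n] v) ≤ Metric.diam (f^[n] '' U) :=
    Metric.dist_le_diam_of_mem (isCompact_univ.isBounded.subset (subset_univ _))
      (mem_image_of_mem _ hu) (mem_image_of_mem _ hv)
  exact (huc (by linarith)).le
end

section
/- Let (X,f) be a compact dynamical system which is equicontinuous and topologically transitive. Then (X,f) is minimal and f is a homeomorphism. -/
/-!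
Minimality: if `f^[n]` sends some point near `x` to a point near `y`, equicontinuity forces
`f^[n] x` itself to be near `y`; transitivity provides such an `n`, so every orbit is dense.

Homeomorphism: by minimality a point `a` lies in the orbit closure of `f a`, so it returns
arbitrarily close to itself at a positive time `k`. Equicontinuity carries this estimate along the
orbit of `a`, and density of that orbit makes `f^[k]` uniformly close to the identity. If
`f a = f b` then `f^[k] a = f^[k] b` is close to both `a` and `b`, hence `a = b`. A continuous
bijection of a compact Hausdorff space is a homeomorphism.
-/

open Filter Set Metric Topology

theorem minimalSystem_of_transitive {X : Type*} [MetricSpace X] (f : X → X)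
    (heq : EquicontinuousSystem f) (htrans : TopTransitive f) : MinimalSystem f := by
  intro x
  refine Set.eq_univ_of_forall fun y => Metric.mem_closure_iff.2 fun ε hε => ?_
  obtain ⟨δ, hδ, h⟩ := heq (ε / 2) (half_pos hε)
  obtain ⟨n, z, ⟨u, hu, rfl⟩, hz⟩ := htrans (ball x δ) (ball y (ε / 2)) isOpen_ball isOpen_ball
    ⟨x, mem_ball_self hδ⟩ ⟨y, mem_ball_self (half_pos hε)⟩
  refine ⟨f^[n] x, ⟨n, rfl⟩, ?_⟩
  have h1 := h u x hu n
  rw [mem_ball'] at hz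
  linarith [dist_triangle y (f^[n] u) (f^[n] x)]

/-- Some positive iterate of `f` is uniformly close to the identity: the return of one point
spreads along its dense orbit. -/
theorem exists_iterate_succ_near_id {X : Type*} [MetricSpace X] (f : X → X) (hf : Continuous f)
    (heq : EquicontinuousSystem f) (hmin : MinimalSystem f) (a : X) {ε : ℝ} (hε : 0 < ε) :
    ∃ k : ℕ, ∀ z, dist z (f^[k + 1] z) ≤ ε := by
  obtain ⟨δ, hδ, h⟩ := heq ε hε
  -- The orbit of `f a`, rather than of `a`, guarantees a positive return time.
  have ha : a ∈ closure (orbitOf f (f a)) := by rw [hmin]; trivial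
  obtain ⟨_, ⟨k, rfl⟩, hk⟩ := Metric.mem_closure_iff.1 ha δ hδ
  refine ⟨k, fun z => ?_⟩
  have hcl : IsClosed {z | dist z (f^[k + 1] z) ≤ ε} :=
    isClosed_le (continuous_id.dist (hf.iterate _)) continuous_const
  have hsub : orbitOf f a ⊆ {z | dist z (f^[k + 1] z) ≤ ε} := by
    rintro _ ⟨j, rfl⟩
    have hj := h a (f^[k + 1] a) hk j
    rw [(Function.Commute.iterate_iterate_self f j (k + 1)).eq a] at hj
    exact hj.le
  have hz : z ∈ closure (orbitOf f a) := by rw [hmin]; trivial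
  exact closure_minimal hsub hcl hz

theorem injective_of_equicontinuous_minimal {X : Type*} [MetricSpace X] (f : X → X)
    (hf : Continuous f) (heq : EquicontinuousSystem f) (hmin : MinimalSystem f) :
    Function.Injective f := by
  intro a b hab
  refine eq_of_forall_dist_le fun ε hε => ?_
  obtain ⟨k, hk⟩ := exists_iterate_succ_near_id f hf heq hmin a (half_pos hε)
  have h1 := hk a
  have h2 := hk b
  rw [Function.iterate_succ_apply, hab, ← Function.iterate_succ_apply] at h1
  linarith [dist_triangle_right a b (f^[k + 1] b)]

theorem equicontinuous_transitive_minimal {X : Type*} [MetricSpace X]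
    [CompactSpace X] (f : X → X) (hf : Continuous f) (hsurj : Function.Surjective f)
    (heq : EquicontinuousSystem f) (htrans : TopTransitive f) :
    MinimalSystem f ∧ ∃ h : X ≃ₜ X, ∀ x : X, h x = f x := by
  have hmin := minimalSystem_of_transitive f heq htrans
  have hbij : Function.Bijective f :=
    ⟨injective_of_equicontinuous_minimal f hf heq hmin, hsurj⟩
  exact ⟨hmin, Continuous.homeoOfEquivCompactToT2 (f := Equiv.ofBijective f hbij) hf,
    fun _ => rfl⟩
end

section
/- Let (X,f) be a topologically transitive compact dynamical system without isolated points. If (X,f) is not sensitive, then (X,f) is uniformly rigid. -/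
/-!
Non-sensitivity supplies, for every `ε > 0`, a nonempty open set `U` all of whose iterates have
diameter at most `ε`. As there are no isolated points, transitivity gives arbitrarily large
return times of `U` to itself (`exists_large_return_time`). If `u ∈ U` and `f^[n] u ∈ U`, then for
`y ∈ U` and every `m`, the points `f^[m] y`, `f^[m] u`, `f^[m] (f^[n] u)`, `f^[m] (f^[n] y)` are
successively within `ε`, so `f^[n]` moves every point of `⋃ m, f^[m] '' U` by at most `3 * ε`.
This union is dense by transitivity, hence `f^[n]` is uniformly `3 * ε`-close to the identity
(`exists_iterate_near_id`). Letting `ε` tend to `0` along increasing `n` gives uniform rigidity.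
-/

open Filter Set Metric Topology

/-- Transitivity alone could return the time `0`; without isolated points one can shrink the source
and the target inside `U` so that all times below `N` are excluded. -/
lemma exists_large_return_time {X : Type*} [MetricSpace X] {f : X → X} (hf : Continuous f)
    (htrans : TopTransitive f) (hniso : ∀ x : X, (𝓝[≠] x).NeBot)
    {U : Set X} (hU : IsOpen U) (hne : U.Nonempty) (N : ℕ) :
    ∃ n, N ≤ n ∧ ∃ u ∈ U, f^[n] u ∈ U := by
  obtain ⟨x, hx⟩ := hne
  have := hniso x
  have hinf : U.Infinite := infinite_of_mem_nhds x (hU.mem_nhds hx)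
  -- The target is a small ball around a point `y ∈ U` off the first `N` points of the orbit of `x`.
  have hfin : ((fun n => f^[n] x) '' Set.Iio N).Finite := (Set.finite_Iio N).image _
  obtain ⟨y, hyU, hy⟩ := hinf.exists_notMem_finite hfin
  obtain ⟨r, hr, hball⟩ := Metric.nhds_basis_closedBall.mem_iff.1
    (hfin.isClosed.isOpen_compl.mem_nhds hy)
  have hWo : IsOpen (U ∩ ⋂ n ∈ Set.Iio N, f^[n] ⁻¹' (closedBall y r)ᶜ) :=
    hU.inter ((Set.finite_Iio N).isOpen_biInter fun n _ =>
      isClosed_closedBall.isOpen_compl.preimage (hf.iterate n))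
  obtain ⟨n, z, ⟨w, hw, rfl⟩, hzU, hz⟩ := htrans _ (U ∩ ball y r) hWo (hU.inter isOpen_ball)
    ⟨x, hx, Set.mem_iInter₂.2 fun n hn h => hball h ⟨n, hn, rfl⟩⟩ ⟨y, hyU, mem_ball_self hr⟩
  refine ⟨n, ?_, w, hw.1, hzU⟩
  by_contra hn
  exact Set.mem_iInter₂.1 hw.2 n (not_le.1 hn) (ball_subset_closedBall hz)

lemma exists_iterate_near_id {X : Type*} [MetricSpace X] {f : X → X} (hf : Continuous f)
    (htrans : TopTransitive f) (hniso : ∀ x : X, (𝓝[≠] x).NeBot)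
    (hns : ¬ Sensitive f) {ε : ℝ} (hε : 0 < ε) (N : ℕ) :
    ∃ n, N ≤ n ∧ ∀ x, dist (f^[n] x) x ≤ 3 * ε := by
  unfold Sensitive at hns
  push Not at hns
  obtain ⟨U, hU, hne, hsmall⟩ := hns ε hε
  obtain ⟨n, hn, u, hu, hnu⟩ := exists_large_return_time hf htrans hniso hU hne N
  refine ⟨n, hn, ?_⟩
  have hdense : Dense (⋃ m, f^[m] '' U) := by
    refine dense_iff_inter_open.2 fun V hV hVne => ?_
    obtain ⟨m, z, hz, hzV⟩ := htrans U V hU hV hne hVne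
    exact ⟨z, hzV, Set.mem_iUnion.2 ⟨m, hz⟩⟩
  have hclosed : IsClosed {x | dist (f^[n] x) x ≤ 3 * ε} :=
    isClosed_le ((hf.iterate n).dist continuous_id) continuous_const
  have hsub : (⋃ m, f^[m] '' U) ⊆ {x | dist (f^[n] x) x ≤ 3 * ε} := by
    rintro _ hx
    obtain ⟨m, y, hy, rfl⟩ := Set.mem_iUnion.1 hx
    have h1 := hsmall y hy u hu (n + m)
    have h2 := hsmall _ hnu u hu m
    have h3 := hsmall u hu y hy m
    rw [← Function.iterate_add_apply, add_comm m n] at h2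
    have := dist_triangle4 (f^[n + m] y) (f^[n + m] u) (f^[m] u) (f^[m] y)
    rw [Set.mem_ofPred_eq, ← Function.iterate_add_apply]
    linarith
  exact fun x => hclosed.closure_subset_iff.2 hsub (hdense x)

theorem not_sensitive_uniformly_rigid {X : Type*} [MetricSpace X] [CompactSpace X]
    (f : X → X) (hf : Continuous f) (hsurj : Function.Surjective f)
    (htrans : TopTransitive f) (hniso : ∀ x : X, (𝓝[≠] x).NeBot)
    (hns : ¬ Sensitive f) : UniformlyRigid f := by
  obtain ⟨φ, hφ, h⟩ := Filter.extraction_forall_of_frequently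
    (P := fun k n => ∀ x, dist (f^[n] x) x ≤ 3 * (1 / ((k : ℝ) + 1)))
    fun k => Filter.frequently_atTop.2 fun N =>
      exists_iterate_near_id hf htrans hniso hns Nat.one_div_pos_of_nat N
  refine ⟨φ, hφ, Metric.tendstoUniformly_iff.2 fun ε hε => ?_⟩
  have hlim : Tendsto (fun k : ℕ => 3 * (1 / ((k : ℝ) + 1))) atTop (𝓝 0) := by
    simpa using tendsto_one_div_add_atTop_nhds_zero_nat.const_mul (3 : ℝ)
  filter_upwards [hlim.eventually_lt_const hε] with k hk x
  rw [dist_comm]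
  exact (h k x).trans_lt hk
end

section
/- Let (X,f) be a topologically transitive compact dynamical system. Then either (X,f) is thickly sensitive, or every transitive point of (X,f) is a syndetically equicontinuous point. In particular, if (X,f) is minimal, then (X,f) is either thickly sensitive or every point of X is syndetically equicontinuous. -/
/-! The dichotomy follows by negating thick sensitivity. If it fails, then for every `ε > 0` some
nonempty open set `U` has images `f^[n] '' U` of diameter at most `ε / 2` for a syndetic set of
times `n`. The orbit of a transitive point `x` enters `U` at some time `m`, so by continuity
`f^[m]` carries a ball around `x` into `U`, and the syndetic set shifted by `m` witnesses that `x`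
is syndetically equicontinuous; this is `syndeticallyEquicontinuousPt_of_dense`. In a minimal
system every point is transitive. -/

open Filter Set Metric Topology

/-- The case where thick sensitivity fails: continuity of `f^[m]`, for `m` a time at which the
orbit of `x` enters an insensitive open set, transports syndetic times of small diameter to `x`. -/
theorem syndeticallyEquicontinuousPt_of_dense {X : Type*} [MetricSpace X] [CompactSpace X]
    {f : X → X} (hf : Continuous f) (hns : ¬ ThicklySensitive f) {x : X}
    (hx : Dense (orbitOf f x)) : SyndeticallyEquicontinuousPt f x := by
  intro ε hε
  unfold ThicklySensitive Thick at hns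
  push Not at hns
  obtain ⟨U, hU, hUne, k, hk⟩ := hns (ε / 2) (half_pos hε)
  obtain ⟨_, hm, m, rfl⟩ := hx.inter_open_nonempty U hU hUne
  obtain ⟨δ, hδ, hball⟩ := Metric.isOpen_iff.1 (hU.preimage (hf.iterate m)) x hm
  refine ⟨δ, hδ, k + m, fun n => ?_⟩
  obtain ⟨i, hik, hi⟩ := hk n
  have hdiam : Metric.diam (f^[n + i] '' U) ≤ ε / 2 := not_lt.1 hi
  refine ⟨i + m, by lia, fun y hy => ?_⟩
  have hyU : f^[m] y ∈ U := hball (Metric.mem_ball'.2 hy)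
  rw [← add_assoc, Function.iterate_add_apply f (n + i) m x,
    Function.iterate_add_apply f (n + i) m y]
  calc dist (f^[n + i] (f^[m] x)) (f^[n + i] (f^[m] y))
      ≤ Metric.diam (f^[n + i] '' U) := Metric.dist_le_diam_of_mem isBounded_of_compactSpace
        (mem_image_of_mem _ hm) (mem_image_of_mem _ hyU)
    _ < ε := by linarith

theorem huang_kolyada_zhang_dichotomy {X : Type*} [MetricSpace X] [CompactSpace X]
    (f : X → X) (hf : Continuous f) (hsurj : Function.Surjective f)
    (htrans : TopTransitive f) :
    (ThicklySensitive f ∨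
      ∀ x : X, Dense (orbitOf f x) → SyndeticallyEquicontinuousPt f x) ∧
    (MinimalSystem f →
      ThicklySensitive f ∨ ∀ x : X, SyndeticallyEquicontinuousPt f x) := by
  have key : ThicklySensitive f ∨
      ∀ x : X, Dense (orbitOf f x) → SyndeticallyEquicontinuousPt f x :=
    or_iff_not_imp_left.2 fun hns _ hx => syndeticallyEquicontinuousPt_of_dense hf hns hx
  exact ⟨key, fun hmin => key.imp_right fun h x => h x (dense_iff_closure_eq.2 (hmin x))⟩
end
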